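/- (Solution of the Kolmogorov problem for orders (0,k,r−2,r)) Let r ≥ 4 and 0 < k < r−2 be integers, and let f ∈ L^r_{∞,∞} be non-constant. Then there exist α, b > 0 and c, d ≥ 0 such that the function g = α·ψ_r(0,b,c) + d satisfies M_0(g) = M_0(f), M_k(g) = M_k(f), M_{r−2}(g) = M_{r−2}(f), and M_r(g) = M_r(f). -/

import Mathlib

open MeasureTheory Filter

noncomputable section

/-- The uniform norm `‖f‖ = sup_{t ∈ ℝ} |f t|` of a function `f : ℝ → ℝ`. -/
def unif (f : ℝ → ℝ) : ℝ := ⨆ t : ℝ, |f t|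

/-- `M k f = ‖f⁽ᵏ⁾‖`, the uniform norm of the `k`-th derivative of `f`. -/
def M (k : ℕ) (f : ℝ → ℝ) : ℝ := unif (iteratedDeriv k f)

/-- The class `L^r_{∞,∞}`: bounded functions `f : ℝ → ℝ` having `r-1` (continuous)
derivatives, with `f⁽ʳ⁻¹⁾` locally absolutely continuous and `f⁽ʳ⁾` essentially bounded;
the last two conditions are equivalent to `f⁽ʳ⁻¹⁾` being Lipschitz. -/
def MemL (r : ℕ) (f : ℝ → ℝ) : Prop :=
  Continuous f ∧ (∃ C : ℝ, ∀ t : ℝ, |f t| ≤ C) ∧ ContDiff ℝ (r - 1 : ℕ) f ∧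
    ∃ K : NNReal, LipschitzWith K (iteratedDeriv (r - 1) f)

/-- The Euler perfect spline `φ_r`: the `r`-th `2π`-periodic antiderivative with zero
mean value of `t ↦ sgn (sin t)`. -/
def eulerPhi : ℕ → ℝ → ℝ
  | 0 => fun t => Real.sign (Real.sin t)
  | (s + 1) => fun t =>
      (∫ x in (0:ℝ)..t, eulerPhi s x) -
        (1 / (2 * Real.pi)) * ∫ x in (0:ℝ)..(2 * Real.pi), ∫ u in (0:ℝ)..x, eulerPhi s u

/-- `φ_{λ,r}(t) = λ^{-r} φ_r (λ t)`. -/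
def eulerPhiL (lam : ℝ) (r : ℕ) (t : ℝ) : ℝ := lam ^ (-(r : ℤ)) * eulerPhi r (lam * t)

/-- The basic step function: `0` on `[0,a]`, `1` on `(a, a+b]`, `0` after `a+b`. -/
def psiBase (a b : ℝ) (t : ℝ) : ℝ := if t ≤ a then 0 else if t ≤ a + b then 1 else 0

/-- `psiBase` continued evenly with respect to the point `a+b+c`. -/
def psiHalf (a b c t : ℝ) : ℝ :=
  if t ≤ a + b + c then psiBase a b t else psiBase a b (2 * (a + b + c) - t)

/-- The Rodov step function `ψ_0(a,b,c)`: equal to `psiBase` on `[0, a+b+c]`, continued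
evenly with respect to `a+b+c`, then oddly with respect to `2(a+b+c)`, then
`4(a+b+c)`-periodically. -/
def psiZero (a b c t : ℝ) : ℝ :=
  if (t - 4 * (a + b + c) * ⌊t / (4 * (a + b + c))⌋) ≤ 2 * (a + b + c) then
    psiHalf a b c (t - 4 * (a + b + c) * ⌊t / (4 * (a + b + c))⌋)
  else
    -psiHalf a b c (4 * (a + b + c) - (t - 4 * (a + b + c) * ⌊t / (4 * (a + b + c))⌋))

/-- `ψ_s(a,b,c)`: the `s`-th periodic antiderivative of `ψ_0(a,b,c)` with zero mean
value over the period `[0, 4(a+b+c)]`. -/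
def psi : ℕ → ℝ → ℝ → ℝ → ℝ → ℝ
  | 0 => psiZero
  | (s + 1) => fun a b c t =>
      (∫ x in (0:ℝ)..t, psi s a b c x) -
        (1 / (4 * (a + b + c))) *
          ∫ x in (0:ℝ)..(4 * (a + b + c)), ∫ u in (0:ℝ)..x, psi s a b c u

/-- The modulus of continuity `ω(D^k, X; δ) = sup {‖f⁽ᵏ⁾‖ : f ∈ X, ‖f‖ ≤ δ}` of the
differentiation operator `D^k` on a class `X`. -/
def omegaMod (k : ℕ) (X : Set (ℝ → ℝ)) (δ : ℝ) : ℝ :=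
  sSup {y : ℝ | ∃ f ∈ X, M 0 f ≤ δ ∧ M k f = y}

end

noncomputable section

/-- decreasing quarter wave -/
def PW (b : ℝ) : ℕ → ℝ → ℝ → ℝ
  | 0 => fun c y => b ^ 2 / 2 - (max (y - c) 0) ^ 2 / 2
  | (i + 1) => fun c y => ∫ s in (0:ℝ)..(b + c - y), PW b i c s

theorem PW_cont (b : ℝ) (i : ℕ) : Continuous (fun p : ℝ × ℝ => PW b i p.1 p.2) := by
  induction i with
  | zero => simp only [PW]; fun_prop
  | succ i ih =>
    simp only [PW]
    have h := intervalIntegral.continuous_parametric_intervalIntegral_of_continuous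
      (μ := volume) (f := fun (p : ℝ × ℝ) (s : ℝ) => PW b i p.1 s) (a₀ := 0)
      (s := fun p : ℝ × ℝ => b + p.1 - p.2)
      (by
        have : (Function.uncurry fun (p : ℝ × ℝ) (s : ℝ) => PW b i p.1 s)
          = (fun p : ℝ × ℝ => PW b i p.1 p.2) ∘ (fun z : (ℝ × ℝ) × ℝ => (z.1.1, z.2)) := by
          ext z; rfl
        rw [this]; exact ih.comp (by fun_prop)) (by fun_prop)
    exact h

theorem PW_cont_y (b : ℝ) (i : ℕ) (c : ℝ) : Continuous (PW b i c) :=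
  (PW_cont b i).comp (f := fun y : ℝ => (c, y)) (by fun_prop)

theorem PW_cont_c (b : ℝ) (i : ℕ) : Continuous (fun c => PW b i c 0) :=
  (PW_cont b i).comp (f := fun y : ℝ => (y, (0:ℝ))) (by fun_prop)

theorem PW_deriv (b : ℝ) (i : ℕ) (c y : ℝ) :
    HasDerivAt (PW b (i + 1) c) (-PW b i c (b + c - y)) y := by
  have hc := PW_cont_y b i c
  have h1 : HasDerivAt (fun u => ∫ s in (0:ℝ)..u, PW b i c s) (PW b i c (b + c - y)) (b + c - y) :=
    intervalIntegral.integral_hasDerivAt_right (hc.intervalIntegrable _ _)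
      (hc.stronglyMeasurableAtFilter _ _) hc.continuousAt
  have h2 : HasDerivAt (fun y : ℝ => b + c - y) (-1) y := by
    simpa using (hasDerivAt_id y).const_sub (b + c)
  have := h1.comp y h2
  simpa [PW, Function.comp_def] using this

theorem PW_zero_end (b : ℝ) (i : ℕ) (c : ℝ) : PW b (i + 1) c (b + c) = 0 := by
  simp [PW]

theorem PW_pos (b : ℝ) (hb : 0 < b) (i : ℕ) (c y : ℝ) (_hc : 0 ≤ c) (hy : 0 ≤ y) (hyb : y < b + c) :
    0 < PW b i c y := by
  induction i generalizing y with
  | zero =>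
    simp only [PW]
    have h1 : max (y - c) 0 < b := max_lt (by linarith) hb
    have h2 : 0 ≤ max (y - c) 0 := le_max_right _ _
    nlinarith
  | succ i ih =>
    simp only [PW]
    apply intervalIntegral.intervalIntegral_pos_of_pos_on
    · exact (PW_cont_y b i c).intervalIntegrable _ _
    · intro x hx; exact ih x hx.1.le (by linarith [hx.2])
    · linarith

theorem PW_nonneg (b : ℝ) (hb : 0 < b) (i : ℕ) (c y : ℝ) (hc : 0 ≤ c) (hy : 0 ≤ y) (hyb : y ≤ b + c) :
    0 ≤ PW b i c y := by
  rcases hyb.lt_or_eq with h | h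
  · exact (PW_pos b hb i c y hc hy h).le
  · cases i with
    | zero =>
      simp only [PW]
      have h1 : max (y - c) 0 ≤ b := max_le (by linarith) hb.le
      have h2 : 0 ≤ max (y - c) 0 := le_max_right _ _
      nlinarith
    | succ i => rw [h, PW_zero_end]

theorem PW_mono (b : ℝ) (hb : 0 < b) (i : ℕ) (c c' y : ℝ) (hc : 0 ≤ c) (hcc : c ≤ c') (hy : 0 ≤ y)
    (hyb : y ≤ b + c) : PW b i c y ≤ PW b i c' y := by
  induction i generalizing y with
  | zero =>
    simp only [PW]
    have h1 : max (y - c') 0 ≤ max (y - c) 0 := max_le_max (by linarith) le_rfl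
    have h2 : 0 ≤ max (y - c') 0 := le_max_right _ _
    nlinarith
  | succ i ih =>
    simp only [PW]
    calc _ ≤ ∫ s in (0:ℝ)..(b + c - y), PW b i c' s := by
          apply intervalIntegral.integral_mono_on (by linarith)
            ((PW_cont_y b i c).intervalIntegrable _ _) ((PW_cont_y b i c').intervalIntegrable _ _)
          intro x hx; exact ih x hx.1 (by linarith [hx.2])
      _ ≤ _ := by
          rw [← intervalIntegral.integral_add_adjacent_intervals (b := b + c - y) (c := b + c' - y)
            ((PW_cont_y b i c').intervalIntegrable _ _) ((PW_cont_y b i c').intervalIntegrable _ _)]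
          have : 0 ≤ ∫ s in (b + c - y)..(b + c' - y), PW b i c' s := by
            apply intervalIntegral.integral_nonneg (by linarith)
            intro x hx
            exact PW_nonneg b hb i c' x (by linarith) (by linarith [hx.1]) (by linarith [hx.2])
          linarith

theorem PW_strict (b : ℝ) (hb : 0 < b) (i : ℕ) (c y : ℝ) (hc : 0 ≤ c) (hy : 0 < y)
    (hyb : y ≤ b + c) : PW b (i + 1) c y < PW b (i + 1) c 0 := by
  simp only [PW]
  rw [← intervalIntegral.integral_add_adjacent_intervals (b := b + c - y) (c := b + c - 0)
            ((PW_cont_y b i c).intervalIntegrable _ _) ((PW_cont_y b i c).intervalIntegrable _ _)]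
  have : 0 < ∫ s in (b + c - y)..(b + c - 0), PW b i c s := by
    apply intervalIntegral.intervalIntegral_pos_of_pos_on
    · exact (PW_cont_y b i c).intervalIntegrable _ _
    · intro x hx; exact PW_pos b hb i c x hc (by linarith [hx.1]) (by linarith [hx.2])
    · linarith
  linarith

theorem PW_strict0 (b : ℝ) (y : ℝ) (hy : 0 < y) : PW b 0 0 y < PW b 0 0 0 := by
  simp only [PW]
  rw [max_eq_left (by linarith)]; simp; positivity

theorem PW_growth (b : ℝ) (hb : 0 < b) (i : ℕ) (c : ℝ) (hc : 2 ≤ c) :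
    (∀ y, 0 ≤ y → y ≤ c / 2 → b ^ 2 / 2 ≤ PW b i c y) ∧ b ^ 2 / 2 * (c / 2) ≤ PW b (i + 1) c 0 := by
  have key : ∀ i, (∀ y, 0 ≤ y → y ≤ c / 2 → b ^ 2 / 2 ≤ PW b i c y) →
      ∀ y, 0 ≤ y → y ≤ c / 2 → b ^ 2 / 2 * (c / 2) ≤ PW b (i + 1) c y := by
    intro i h y hy hy2
    simp only [PW]
    rw [← intervalIntegral.integral_add_adjacent_intervals (b := c / 2) (c := b + c - y)
            ((PW_cont_y b i c).intervalIntegrable _ _) ((PW_cont_y b i c).intervalIntegrable _ _)]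
    have h1 : 0 ≤ ∫ s in (c / 2)..(b + c - y), PW b i c s := by
      apply intervalIntegral.integral_nonneg (by linarith)
      intro x hx
      exact PW_nonneg b hb i c x (by linarith) (by linarith [hx.1]) (by linarith [hx.2])
    have h2 : ∫ s in (0:ℝ)..(c / 2), (b ^ 2 / 2) ≤ ∫ s in (0:ℝ)..(c / 2), PW b i c s := by
      apply intervalIntegral.integral_mono_on (by linarith) (by simp)
        ((PW_cont_y b i c).intervalIntegrable _ _)
      intro x hx; exact h x hx.1 hx.2
    simp at h2
    linarith
  have h0 : ∀ i, (∀ y, 0 ≤ y → y ≤ c / 2 → b ^ 2 / 2 ≤ PW b i c y) := by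
    intro i
    induction i with
    | zero =>
      intro y hy hy2
      simp only [PW]; rw [max_eq_right (by linarith)]; simp
    | succ i ih =>
      intro y hy hy2
      refine le_trans ?_ (key i ih y hy hy2)
      have : 0 < b ^ 2 / 2 := by positivity
      nlinarith
  exact ⟨h0 i, key i (h0 i) 0 le_rfl (by linarith)⟩

/-- comparison -/
def Cmp (q : ℝ) (F Φ : ℝ → ℝ) : Prop :=
  ∀ e d : ℝ, (e = 1 ∨ e = -1) → (d = 1 ∨ d = -1) → ∀ x y t : ℝ, 0 ≤ y → 0 ≤ t → y + t ≤ q →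
    Φ y < e * F x → Φ (y + t) ≤ e * F (x + d * t)

theorem first_cross (D D' : ℝ → ℝ) (hD : ∀ t, HasDerivAt D (D' t) t) (t1 : ℝ) (ht : 0 ≤ t1)
    (h0 : 0 < D 0) (h1 : D t1 < 0) : ∃ t, 0 < t ∧ t < t1 ∧ 0 < D t ∧ D' t < 0 := by
  have hcont : Continuous D := continuous_iff_continuousAt.2 fun t => (hD t).continuousAt
  set S := {t | t ∈ Set.Icc 0 t1 ∧ D t ≤ 0} with hS
  have hSc : IsClosed S := by
    apply IsClosed.inter isClosed_Icc (isClosed_le hcont continuous_const)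
  have hne : S.Nonempty := ⟨t1, ⟨ht, le_rfl⟩, h1.le⟩
  have hbdd : BddBelow S := ⟨0, fun t h => h.1.1⟩
  have hmem := hSc.csInf_mem hne hbdd
  set s := sInf S
  have hs0 : 0 < s := by
    rcases hmem.1.1.lt_or_eq with h | h
    · exact h
    · have := hmem.2; rw [← h] at this; linarith
  obtain ⟨t, htm, hte⟩ := exists_hasDerivAt_eq_slope D D' hs0 hcont.continuousOn (fun x _ => hD x)
  refine ⟨t, htm.1, lt_of_lt_of_le htm.2 hmem.1.2, ?_, ?_⟩
  · by_contra h
    have : s ≤ t := csInf_le hbdd ⟨⟨htm.1.le, by linarith [htm.2, hmem.1.2]⟩, not_lt.1 h⟩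
    linarith [htm.2]
  · rw [hte]; exact div_neg_of_neg_of_pos (by linarith [hmem.2]) (by linarith)

theorem mono_of (H H' : ℝ → ℝ) (hH : ∀ t, HasDerivAt H (H' t) t) (T : ℝ) (hT : 0 ≤ T)
    (h : ∀ t, 0 ≤ t → t ≤ T → 0 ≤ H' t) : H 0 ≤ H T := by
  have hcont : Continuous H := continuous_iff_continuousAt.2 fun t => (hH t).continuousAt
  have : MonotoneOn H (Set.Icc 0 T) := by
    apply monotoneOn_of_deriv_nonneg (convex_Icc _ _) hcont.continuousOn
    · intro x _; exact (hH x).differentiableAt.differentiableWithinAt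
    · intro x hx
      rw [interior_Icc] at hx
      rw [(hH x).deriv]; exact h x hx.1.le hx.2.le
  exact this ⟨le_rfl, hT⟩ ⟨hT, le_rfl⟩ hT

theorem core (q : ℝ) (G v Φ Ψ : ℝ → ℝ) (hG : ∀ x, HasDerivAt G (v x) x)
    (hΨ : ∀ y, HasDerivAt Ψ (-Φ (q - y)) y)
    (hv : ∀ x y t, 0 ≤ y → 0 ≤ t → y + t ≤ q → Φ y < - v x → Φ (y + t) ≤ - v (x - t))
    (hle : ∀ x, G x ≤ Ψ 0) (x y t : ℝ) (hy : 0 ≤ y) (ht : 0 ≤ t) (hyt : y + t ≤ q)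
    (hx : Ψ y < G x) : Ψ (y + t) ≤ G (x + t) := by
  by_contra hcon
  push Not at hcon
  obtain ⟨t0, h1, h2, h3, h4⟩ := first_cross (fun t => G (x + t) - Ψ (y + t))
    (fun t => v (x + t) - (-Φ (q - (y + t))))
    (fun t => ((hG (x + t)).comp_const_add x t).sub ((hΨ (y + t)).comp_const_add y t)) t ht
    (by simpa using hx) (by linarith)
  have := mono_of (fun s => G (x + t0 - s) - Ψ (y + t0 - s))
    (fun s => -v (x + t0 - s) - (- (-Φ (q - (y + t0 - s)))))
    (fun s => ((hG (x + t0 - s)).comp_const_sub (x + t0) s).sub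
      ((hΨ (y + t0 - s)).comp_const_sub (y + t0) s)) (y + t0) (by linarith)
    (by
      intro s hs hs2
      have := hv (x + t0) (q - (y + t0)) s (by linarith) hs (by linarith) (by linarith)
      have e : q - (y + t0 - s) = q - (y + t0) + s := by ring
      rw [e]; linarith)
  simp only [sub_zero, sub_self] at this
  have := hle (x + t0 - (y + t0))
  linarith

theorem Cmp_step (q : ℝ) (F u Φ Ψ : ℝ → ℝ) (hF : ∀ x, HasDerivAt F (u x) x)
    (hΨ : ∀ y, HasDerivAt Ψ (-Φ (q - y)) y) (hu : Cmp q u Φ) (hle : ∀ x, |F x| ≤ Ψ 0) :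
    Cmp q F Ψ := by
  intro e d he hd x y t hy ht hyt hx
  have hd2 : d * d = 1 := by rcases hd with rfl | rfl <;> norm_num
  have := core q (fun s => e * F (d * s)) (fun s => e * (u (d * s) * d)) Φ Ψ
    (by
      intro s
      have h : HasDerivAt (fun s : ℝ => d * s) d s := by simpa using (hasDerivAt_id s).const_mul d
      exact ((hF (d * s)).comp s h).const_mul e) hΨ
    (by
      intro x y t hy ht hyt hx
      have := hu (-(e * d)) (-d) (by rcases he with rfl | rfl <;> rcases hd with rfl | rfl <;> simp)
        (by rcases hd with rfl | rfl <;> simp) (d * x) y t hy ht hyt (by linarith)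
      have e : d * x + -d * t = d * (x - t) := by ring
      rw [e] at this
      linarith)
    (by
      intro x
      have := abs_le.1 (hle (d * x))
      rcases he with rfl | rfl <;> linarith) (d * x) y t hy ht hyt
    (by simp only [← mul_assoc, hd2, one_mul]; exact hx)
  simp only [mul_add, ← mul_assoc, hd2, one_mul] at this
  exact this

/-- bounded -/
def Bd (f : ℝ → ℝ) : Prop := ∃ C : ℝ, ∀ t : ℝ, |f t| ≤ C

theorem le_unif {f : ℝ → ℝ} (h : Bd f) (t : ℝ) : |f t| ≤ unif f := by
  obtain ⟨C, hC⟩ := h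
  exact le_ciSup (f := fun t => |f t|) ⟨C, by rintro _ ⟨t, rfl⟩; exact hC t⟩ t

theorem norm_step (q : ℝ) (hq : 0 < q) (F u Φ Ψ : ℝ → ℝ) (hF : ∀ x, HasDerivAt F (u x) x)
    (hΨ : ∀ y, HasDerivAt Ψ (-Φ (q - y)) y) (hΨq : Ψ q = 0) (hu : Cmp q u Φ)
    (hBF : Bd F) (hn : unif u = Φ 0) (hst : ∀ y, 0 < y → y ≤ q → Φ y < Φ 0) :
    Ψ 0 ≤ unif F := by
  have main : ∀ y, 0 < y → y ≤ q → Ψ 0 - Ψ (q - y) ≤ unif F := by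
    intro y hy hyq
    have h1 : Φ y < unif u := hn ▸ hst y hy hyq
    obtain ⟨x, hx⟩ := exists_lt_of_lt_ciSup h1
    obtain ⟨e, he, hex⟩ : ∃ e : ℝ, (e = 1 ∨ e = -1) ∧ Φ y < e * u x := by
      rcases lt_abs.1 hx with h | h
      · exact ⟨1, Or.inl rfl, by linarith⟩
      · exact ⟨-1, Or.inr rfl, by linarith⟩
    have := mono_of (fun t => e * F (x + t) - e * F (x - t) - 2 * Ψ (q - y - t))
      (fun t => e * u (x + t) - e * (-u (x - t)) - 2 * (-(-Φ (q - (q - y - t)))))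
      (fun t => ((((hF (x + t)).comp_const_add x t).const_mul e).sub
        (((hF (x - t)).comp_const_sub x t).const_mul e)).sub
        (((hΨ (q - y - t)).comp_const_sub (q - y) t).const_mul 2)) (q - y) (by linarith)
      (by
        intro t ht ht2
        have h1 := hu e 1 he (Or.inl rfl) x y t hy.le ht (by linarith) hex
        have h2 := hu e (-1) he (Or.inr rfl) x y t hy.le ht (by linarith) hex
        have e1 : q - (q - y - t) = y + t := by ring
        have e2 : x + -1 * t = x - t := by ring
        rw [e2] at h2; rw [one_mul] at h1
        rw [e1]; linarith)
    simp only [sub_zero, add_zero, sub_self] at this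
    have a1 := abs_le.1 (le_unif hBF (x + (q - y)))
    have a2 := abs_le.1 (le_unif hBF (x - (q - y)))
    rcases he with rfl | rfl <;> linarith [a1.1, a1.2, a2.1, a2.2]
  have hc : Continuous Ψ := continuous_iff_continuousAt.2 fun t => (hΨ t).continuousAt
  have hlim : Tendsto (fun y => Ψ 0 - Ψ (q - y)) (nhdsWithin 0 (Set.Ioi 0)) (nhds (Ψ 0)) := by
    have : Continuous (fun y => Ψ 0 - Ψ (q - y)) := by fun_prop
    have := this.tendsto 0
    simp only [sub_zero, hΨq] at this
    exact this.mono_left nhdsWithin_le_nhds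
  refine le_of_tendsto hlim ?_
  filter_upwards [Ioc_mem_nhdsGT hq] with y hy
  exact main y hy.1 hy.2

def St (α b : ℝ) (F : ℕ → ℝ → ℝ) (i : ℕ) (c : ℝ) : Prop :=
  0 ≤ c ∧ unif (F i) = α * PW b i c 0 ∧
    (∀ c', c ≤ c' → Cmp (b + c') (F i) (fun y => α * PW b i c' y)) ∧
    (∀ y, 0 < y → y ≤ b + c → PW b i c y < PW b i c 0)

theorem St_step (α b : ℝ) (hα : 0 < α) (hb : 0 < b) (F : ℕ → ℝ → ℝ) (i : ℕ) (c : ℝ)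
    (hF : ∀ x, HasDerivAt (F (i + 1)) (F i x) x) (hB : Bd (F (i + 1)))
    (h : St α b F i c) : ∃ c', c ≤ c' ∧ St α b F (i + 1) c' := by
  obtain ⟨hc, hn, hcmp, hst⟩ := h
  have hd : ∀ c y, HasDerivAt (fun y => α * PW b (i + 1) c y)
      (-(fun y => α * PW b i c y) (b + c - y)) y := by
    intro c y
    have := (PW_deriv b i c y).const_mul α
    simpa using this
  have h1 : α * PW b (i + 1) c 0 ≤ unif (F (i + 1)) :=
    norm_step (b + c) (by linarith) (F (i + 1)) (F i) (fun y => α * PW b i c y)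
      (fun y => α * PW b (i + 1) c y) hF (hd c) (by simp [PW_zero_end]) (hcmp c le_rfl) hB hn
      (fun y hy hy2 => mul_lt_mul_of_pos_left (hst y hy hy2) hα)
  obtain ⟨c', hcc', hc'⟩ : ∃ c', c ≤ c' ∧ α * PW b (i + 1) c' 0 = unif (F (i + 1)) := by
    set m := α * (b ^ 2 / 2 * (1 / 2))
    have hm : 0 < m := by positivity
    set C := max (max 2 c) (unif (F (i + 1)) / m)
    have hC2 : 2 ≤ C := (le_max_left _ _).trans (le_max_left _ _)
    have hCc : c ≤ C := (le_max_right _ _).trans (le_max_left _ _)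
    have hCu : unif (F (i + 1)) ≤ α * PW b (i + 1) C 0 := by
      have h2 := (PW_growth b hb i C hC2).2
      have h3 : unif (F (i + 1)) / m ≤ C := le_max_right _ _
      rw [div_le_iff₀ hm] at h3
      calc _ ≤ C * m := h3
        _ = α * (b ^ 2 / 2 * (C / 2)) := by ring
        _ ≤ _ := mul_le_mul_of_nonneg_left h2 hα.le
    have hcont : ContinuousOn (fun c => α * PW b (i + 1) c 0) (Set.Icc c C) :=
      ((PW_cont_c b (i + 1)).const_mul α).continuousOn
    obtain ⟨c', h4, h5⟩ := intermediate_value_Icc hCc hcont ⟨h1, hCu⟩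
    exact ⟨c', h4.1, h5⟩
  refine ⟨c', hcc', hc.trans hcc', hc'.symm, ?_, fun y hy hy2 => PW_strict b hb i c' y (hc.trans hcc') hy hy2⟩
  intro c'' h''
  refine Cmp_step (b + c'') (F (i + 1)) (F i) _ _ hF (hd c'') (hcmp c'' (hcc'.trans h'')) ?_
  intro x
  refine (le_unif hB x).trans ?_
  rw [← hc']
  exact mul_le_mul_of_nonneg_left (PW_mono b hb (i + 1) c' c'' 0 (hc.trans hcc') h'' le_rfl
    (by linarith)) hα.le

theorem St_zero (α b : ℝ) (F : ℕ → ℝ → ℝ) (u : ℝ → ℝ)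
    (hF : ∀ x, HasDerivAt (F 0) (u x) x) (hB : Bd (F 0)) (hu : ∀ x y, |u x - u y| ≤ α * |x - y|)
    (hn : unif (F 0) = α * (b ^ 2 / 2)) : St α b F 0 0 := by
  refine ⟨le_rfl, by simp [PW, hn], ?_, fun y hy _ => PW_strict0 b y hy⟩
  have h1 : Cmp b u (fun y => α * (b - y)) := by
    intro e d he hd x y t hy ht hyt hx
    have h2 := hu x (x + d * t)
    have h3 : |x - (x + d * t)| = t := by
      rcases hd with rfl | rfl <;> simp [abs_of_nonneg ht]
    rw [h3] at h2
    have h4 := abs_le.1 h2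
    simp only at hx ⊢
    rcases he with rfl | rfl <;> linarith [h4.1, h4.2]
  have h2 : Cmp b (F 0) (fun y => α * (b ^ 2 / 2) - α * (y ^ 2 / 2)) := by
    refine Cmp_step b (F 0) u (fun y => α * (b - y)) _ hF ?_ h1 ?_
    · intro y
      have h : HasDerivAt (fun y : ℝ => α * (b ^ 2 / 2) - α / 2 * y ^ 2)
          (-(α / 2 * (((2 : ℕ) : ℝ) * y ^ (2 - 1)))) y :=
        ((hasDerivAt_pow 2 y).const_mul (α / 2)).const_sub (α * (b ^ 2 / 2))
      have e1 : (fun y : ℝ => α * (b ^ 2 / 2) - α * (y ^ 2 / 2))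
        = fun y : ℝ => α * (b ^ 2 / 2) - α / 2 * y ^ 2 := by ext z; ring
      rw [e1]
      refine h.congr_deriv ?_
      norm_num
      ring
    · intro x; simpa [← hn] using le_unif hB x
  intro c hc e d he hd x y t hy ht hyt hx
  have hxle : e * F 0 x ≤ α * (b ^ 2 / 2) := by
    have := abs_le.1 (le_unif hB x)
    rw [hn] at this
    rcases he with rfl | rfl <;> linarith [this.1, this.2]
  have hyc : c ≤ y := by
    by_contra h
    simp only [PW] at hx
    rw [max_eq_right (by linarith)] at hx
    simp at hx
    linarith
  have := h2 e d he hd x (y - c) t (by linarith) ht (by linarith)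
    (by
      simp only [PW] at hx
      rw [max_eq_left (by linarith)] at hx
      linarith)
  simp only [PW]
  rw [max_eq_left (by linarith), show y + t - c = y - c + t by ring]
  linarith

theorem St_chain (α b : ℝ) (hα : 0 < α) (hb : 0 < b) (F : ℕ → ℝ → ℝ) (N i n : ℕ) (c : ℝ)
    (hF : ∀ j, j < N → ∀ x, HasDerivAt (F (j + 1)) (F j x) x) (hB : ∀ j, j ≤ N → Bd (F j))
    (hi : i + n ≤ N) (h : St α b F i c) : ∃ c', c ≤ c' ∧ St α b F (i + n) c' := by
  induction n with
  | zero => exact ⟨c, le_rfl, h⟩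
  | succ n ih =>
    obtain ⟨c', h1, h2⟩ := ih (by omega)
    obtain ⟨c'', h3, h4⟩ := St_step α b hα hb F (i + n) c' (hF _ (by omega)) (hB _ (by omega)) h2
    exact ⟨c'', h1.trans h3, h4⟩

theorem exists_small (n : ℕ) : ∀ (G : ℕ → ℝ → ℝ) (C : ℝ),
    (∀ j, j < n → ∀ x, HasDerivAt (G j) (G (j + 1) x) x) → (∀ t, |G 0 t| ≤ C) →
    ∀ x : ℝ, ∃ ξ : ℝ, x ≤ ξ ∧ ξ ≤ x + n ∧ |G n ξ| ≤ 2 ^ n * C := by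
  induction n with
  | zero => intro G C _ h x; exact ⟨x, le_rfl, by simp, by simpa using h x⟩
  | succ n ih =>
    intro G C hG hC x
    obtain ⟨ξ, h1, h2, h3⟩ := ih (fun j t => G j (t + 1) - G j t) (2 * C)
      (fun j hj x => ((hG j (by omega) (x + 1)).comp_add_const x 1).sub (hG j (by omega) x))
      (by
        intro t
        have a := abs_le.1 (hC (t + 1))
        have b := abs_le.1 (hC t)
        rw [abs_le]; constructor <;> linarith [a.1, a.2, b.1, b.2]) x
    obtain ⟨η, h4, h5⟩ := exists_hasDerivAt_eq_slope (G n) (G (n + 1)) (show ξ < ξ + 1 by linarith)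
      (fun y _ => (hG n (by omega) y).continuousAt.continuousWithinAt)
      (fun y _ => hG n (by omega) y)
    refine ⟨η, by linarith [h4.1], by push_cast; linarith [h4.2], ?_⟩
    rw [h5]
    simp only [add_sub_cancel_left, div_one]
    calc _ ≤ _ := h3
      _ = _ := by ring

theorem lip_of_bd (H u : ℝ → ℝ) (C : ℝ) (hH : ∀ x, HasDerivAt H (u x) x) (hu : ∀ x, |u x| ≤ C)
    (x y : ℝ) : |H x - H y| ≤ C * |x - y| := by
  have := Convex.norm_image_sub_le_of_norm_hasDerivWithin_le (f := H) (f' := u) (s := Set.univ)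
    (C := C) (x := y) (y := x) (fun x _ => (hH x).hasDerivWithinAt) (fun x _ => hu x) convex_univ
    trivial trivial
  simpa using this

theorem all_bd (n : ℕ) (G : ℕ → ℝ → ℝ) (K : ℝ)
    (hG : ∀ j, j < n → ∀ x, HasDerivAt (G j) (G (j + 1) x) x) (h0 : Bd (G 0))
    (hL : ∀ x y, |G n x - G n y| ≤ K * |x - y|) : ∀ j, j ≤ n → Bd (G j) := by
  induction n generalizing K with
  | zero => intro j hj; obtain rfl : j = 0 := by omega
            exact h0
  | succ n ih =>
    have hK : 0 ≤ K := by
      have := (abs_nonneg _).trans (hL 1 0)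
      simpa using this
    have hb : Bd (G (n + 1)) := by
      obtain ⟨C, hC⟩ := h0
      refine ⟨2 ^ (n + 1) * C + K * (n + 1), fun x => ?_⟩
      obtain ⟨ξ, h1, h2, h3⟩ := exists_small (n + 1) G C hG hC x
      have h4 := hL x ξ
      have h5 : |x - ξ| ≤ n + 1 := by
        push_cast at h2
        rw [abs_le]; constructor <;> linarith
      have h6 : |G (n + 1) x| ≤ |G (n + 1) x - G (n + 1) ξ| + |G (n + 1) ξ| := by
        have := abs_add_le (G (n + 1) x - G (n + 1) ξ) (G (n + 1) ξ)
        simpa using this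
      have h7 := mul_le_mul_of_nonneg_left h5 hK
      linarith
    obtain ⟨C, hC⟩ := hb
    have := ih C (fun j hj => hG j (by omega)) (lip_of_bd _ _ C (hG n (by omega)) hC)
    intro j hj
    rcases Nat.lt_or_ge j (n + 1) with h | h
    · exact this j (by omega)
    · obtain rfl : j = n + 1 := by omega
      exact ⟨C, hC⟩

theorem const_zero (H : ℝ → ℝ) (κ : ℝ) (hH : ∀ x, HasDerivAt H κ x) (hB : Bd H) : κ = 0 := by
  obtain ⟨C, hC⟩ := hB
  by_contra hκ
  have h1 : ∀ x, H x - κ * x = H 0 - κ * 0 := by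
    intro x
    have hd : ∀ x, HasDerivAt (fun x => H x - κ * x) (κ - κ * 1) x := fun x =>
      (hH x).sub ((hasDerivAt_id x).const_mul κ)
    exact is_const_of_deriv_eq_zero (fun x => (hd x).differentiableAt)
      (fun x => by rw [(hd x).deriv]; ring) x 0
  have h2 := h1 ((2 * C + 1) / κ)
  rw [mul_div_cancel₀ _ hκ] at h2
  have a := abs_le.1 (hC ((2 * C + 1) / κ))
  have b := abs_le.1 (hC 0)
  linarith [a.1, a.2, b.1, b.2]

theorem const_of_zero (n : ℕ) (G : ℕ → ℝ → ℝ)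
    (hG : ∀ j, j < n → ∀ x, HasDerivAt (G j) (G (j + 1) x) x) (hB : ∀ j, j ≤ n → Bd (G j))
    (h0 : ∀ x, G n x = 0) : ∀ x y, G 0 x = G 0 y := by
  induction n with
  | zero => intro x y; rw [h0, h0]
  | succ n ih =>
    have hc : ∀ x y, G n x = G n y := by
      apply is_const_of_deriv_eq_zero (fun x => (hG n (by omega) x).differentiableAt)
      intro x; rw [(hG n (by omega) x).deriv, h0]
    rcases Nat.eq_zero_or_pos n with h | h
    · subst h; exact hc
    · obtain ⟨m, rfl⟩ : ∃ m, n = m + 1 := ⟨n - 1, by omega⟩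
      have : G (m + 1) 0 = 0 := const_zero (G m) _ (fun x => by
        have := hG m (by omega) x
        rwa [hc x 0] at this) (hB m (by omega))
      exact ih (fun j hj => hG j (by omega)) (fun j hj => hB j (by omega))
        (fun x => by rw [hc x 0, this])

theorem lip_unif (u : ℝ → ℝ) (K : NNReal) (hu : LipschitzWith K u) :
    Bd (deriv u) ∧ ∀ x y, |u x - u y| ≤ unif (deriv u) * |x - y| := by
  have hb : Bd (deriv u) := ⟨K, fun t => by
    have := norm_deriv_le_of_lipschitz (x₀ := t) hu
    simpa using this⟩
  refine ⟨hb, fun x y => ?_⟩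
  have h1 : AbsolutelyContinuousOnInterval u y x :=
    (hu.lipschitzOnWith (s := Set.uIcc y x)).absolutelyContinuousOnInterval
  rw [← h1.integral_deriv_eq_sub]
  have := intervalIntegral.norm_integral_le_of_norm_le_const (a := y) (b := x) (f := deriv u)
    (C := unif (deriv u)) (fun t _ => le_unif hb t)
  simpa using this

theorem psiZero_formula (b c : ℝ) (hq : 0 < b + c) (n : ℤ) (ρ : ℝ) (h0 : 0 ≤ ρ)
    (h1 : ρ < 4 * (b + c)) : psiZero 0 b c (4 * (b + c) * n + ρ) =
      if ρ ≤ 2 * (b + c) then psiHalf 0 b c ρ else -psiHalf 0 b c (4 * (b + c) - ρ) := by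
  have hfl : ⌊(4 * (b + c) * n + ρ) / (4 * (b + c))⌋ = n := by
    rw [Int.floor_eq_iff]
    constructor
    · rw [le_div_iff₀ (by linarith)]; linarith
    · rw [div_lt_iff₀ (by linarith)]; linarith
  simp only [psiZero, zero_add, hfl, add_sub_cancel_left]

theorem exists_rep (Q : ℝ) (hQ : 0 < Q) (t : ℝ) : ∃ (n : ℤ) (ρ : ℝ), 0 ≤ ρ ∧ ρ < Q ∧ t = Q * n + ρ := by
  refine ⟨⌊t / Q⌋, t - Q * ⌊t / Q⌋, ?_, ?_, by ring⟩
  · have := Int.floor_le (t / Q)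
    rw [le_div_iff₀ hQ] at this; linarith
  · have := Int.lt_floor_add_one (t / Q)
    rw [div_lt_iff₀ hQ] at this; linarith

theorem psiHalf_symm (b c t : ℝ) : psiHalf 0 b c (2 * (b + c) - t) = psiHalf 0 b c t := by
  unfold psiHalf
  simp only [zero_add]
  rcases lt_trichotomy t (b + c) with h | h | h
  · rw [if_neg (by linarith), if_pos (by linarith)]; congr 1; ring
  · rw [if_pos (by linarith), if_pos (by linarith)]; congr 1; linarith
  · rw [if_pos (by linarith), if_neg (by linarith)]

theorem psiHalf_zero (b c : ℝ) (hq : 0 < b + c) : psiHalf 0 b c 0 = 0 := by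
  unfold psiHalf psiBase
  simp [hq.le]

theorem psiZero_anti (b c : ℝ) (hq : 0 < b + c) (t : ℝ) :
    psiZero 0 b c (t + 2 * (b + c)) = - psiZero 0 b c t := by
  obtain ⟨n, ρ, h0, h1, rfl⟩ := exists_rep (4 * (b + c)) (by linarith) t
  rw [psiZero_formula b c hq n ρ h0 h1]
  rcases lt_or_ge ρ (2 * (b + c)) with h | h
  · rw [show 4 * (b + c) * (n : ℝ) + ρ + 2 * (b + c) = 4 * (b + c) * n + (ρ + 2 * (b + c)) by ring,
      psiZero_formula b c hq n _ (by linarith) (by linarith), if_pos h.le]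
    rcases h0.lt_or_eq with h3 | h3
    · rw [if_neg (by linarith), ← psiHalf_symm b c ρ]
      congr 2; ring
    · rw [← h3, zero_add, if_pos le_rfl, psiHalf_zero b c hq]
      have := psiHalf_symm b c 0
      rw [sub_zero, psiHalf_zero b c hq] at this
      rw [this, neg_zero]
  · rw [show 4 * (b + c) * (n : ℝ) + ρ + 2 * (b + c) = 4 * (b + c) * ((n + 1 : ℤ) : ℝ) + (ρ - 2 * (b + c)) by
      push_cast; ring,
      psiZero_formula b c hq (n + 1) _ (by linarith) (by linarith), if_pos (by linarith)]
    rcases h.lt_or_eq with h3 | h3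
    · rw [if_neg (by linarith), neg_neg, ← psiHalf_symm]
      congr 1; ring
    · rw [← h3, if_pos le_rfl, sub_self, psiHalf_zero b c hq]
      have := psiHalf_symm b c 0
      rw [sub_zero, psiHalf_zero b c hq] at this
      rw [this, neg_zero]

theorem psiZero_odd (b c : ℝ) (hq : 0 < b + c) (t : ℝ) :
    psiZero 0 b c (-t) = - psiZero 0 b c t := by
  obtain ⟨n, ρ, h0, h1, rfl⟩ := exists_rep (4 * (b + c)) (by linarith) t
  rw [psiZero_formula b c hq n ρ h0 h1]
  rcases h0.lt_or_eq with h3 | h3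
  · rw [show -(4 * (b + c) * (n : ℝ) + ρ) = 4 * (b + c) * ((-n - 1 : ℤ) : ℝ) + (4 * (b + c) - ρ) by
      push_cast; ring,
      psiZero_formula b c hq _ _ (by linarith) (by linarith)]
    rcases lt_trichotomy ρ (2 * (b + c)) with h | h | h
    · rw [if_neg (by linarith), if_pos h.le]; congr 2; ring
    · have := psiHalf_symm b c 0
      rw [sub_zero, psiHalf_zero b c hq] at this
      rw [if_pos (by linarith), if_pos (by linarith), h, this, neg_zero]
      rw [← this]; congr 1; ring
    · rw [if_pos (by linarith), if_neg (by linarith), neg_neg]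
  · rw [show -(4 * (b + c) * (n : ℝ) + ρ) = 4 * (b + c) * ((-n : ℤ) : ℝ) + 0 by
      push_cast; rw [← h3]; ring, psiZero_formula b c hq _ _ le_rfl (by linarith), ← h3,
      if_pos (by linarith), psiHalf_zero b c hq, neg_zero]

theorem psiBase_bd (b t : ℝ) : |psiBase 0 b t| ≤ 1 := by
  unfold psiBase; split_ifs <;> simp

theorem psiHalf_bd (b c t : ℝ) : |psiHalf 0 b c t| ≤ 1 := by
  unfold psiHalf; split_ifs <;> exact psiBase_bd _ _

theorem psiZero_bd (b c t : ℝ) : |psiZero 0 b c t| ≤ 1 := by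
  unfold psiZero; split_ifs
  · exact psiHalf_bd _ _ _
  · rw [abs_neg]; exact psiHalf_bd _ _ _

theorem psiZero_meas (b c : ℝ) : Measurable (psiZero 0 b c) := by
  have h1 : Measurable (psiBase 0 b) := by
    unfold psiBase
    exact Measurable.ite (measurableSet_le measurable_id measurable_const) measurable_const
      (Measurable.ite (measurableSet_le measurable_id measurable_const) measurable_const measurable_const)
  have h2 : Measurable (psiHalf 0 b c) := by
    unfold psiHalf
    exact Measurable.ite (measurableSet_le measurable_id measurable_const) h1
      (h1.comp (measurable_const.sub measurable_id))
  have h3 : Measurable (fun t : ℝ => t - 4 * (0 + b + c) * ((⌊t / (4 * (0 + b + c))⌋ : ℤ) : ℝ)) := by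
    fun_prop
  unfold psiZero
  exact Measurable.ite (measurableSet_le h3 measurable_const) (h2.comp h3)
    (h2.comp (measurable_const.sub h3)).neg

theorem psiZero_int (b c x y : ℝ) : IntervalIntegrable (psiZero 0 b c) volume x y := by
  refine (intervalIntegrable_const (c := (1:ℝ))).mono_fun
    (psiZero_meas b c).aestronglyMeasurable ?_
  refine Filter.Eventually.of_forall fun t => ?_
  simpa using psiZero_bd b c t

/-- symmetries of the `m`-th function -/
def Good (q : ℝ) (m : ℕ) (g : ℝ → ℝ) : Prop :=
  (∀ x y, IntervalIntegrable g volume x y) ∧ (∀ t, g (t + 2 * q) = - g t) ∧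
    ∀ t, g (-t) = (-1) ^ (m + 1) * g t

theorem anti_const (q : ℝ) (hq : 0 < q) (m : ℕ) (g : ℝ → ℝ) (hg : Good q m g) :
    (1 / (4 * q)) * (∫ x in (0:ℝ)..(4 * q), ∫ u in (0:ℝ)..x, g u)
      = (∫ u in (0:ℝ)..(2 * q), g u) / 2 ∧
    ∀ x, (∫ u in (0:ℝ)..(x + 2 * q), g u)
      = (∫ u in (0:ℝ)..(2 * q), g u) - ∫ u in (0:ℝ)..x, g u := by
  obtain ⟨hi, ha, -⟩ := hg
  set I : ℝ → ℝ := fun x => ∫ u in (0:ℝ)..x, g u with hI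
  have hIc : Continuous I := intervalIntegral.continuous_primitive hi 0
  have hsh : ∀ x, I (x + 2 * q) = I (2 * q) - I x := by
    intro x
    have h1 := intervalIntegral.integral_add_adjacent_intervals (hi 0 (2 * q)) (hi (2 * q) (x + 2 * q))
    have h2 : ∫ u in (2 * q)..(x + 2 * q), g u = - I x := by
      have := intervalIntegral.integral_comp_add_right (a := 0) (b := x) g (2 * q)
      rw [zero_add] at this
      rw [← this]
      simp only [ha, intervalIntegral.integral_neg, hI]
    simp only [hI] at h2 ⊢
    linarith
  refine ⟨?_, hsh⟩
  have h3 := intervalIntegral.integral_add_adjacent_intervals (hIc.intervalIntegrable (μ := volume) 0 (2 * q))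
    (hIc.intervalIntegrable (2 * q) (4 * q))
  have h4 : ∫ x in (2 * q)..(4 * q), I x = 2 * q * I (2 * q) - ∫ x in (0:ℝ)..(2 * q), I x := by
    have := intervalIntegral.integral_comp_add_right (a := 0) (b := 2 * q) I (2 * q)
    rw [zero_add, show 2 * q + 2 * q = 4 * q by ring] at this
    rw [← this]
    simp only [hsh]
    rw [intervalIntegral.integral_sub (by simp) (hIc.intervalIntegrable _ _)]
    simp
  change (1 / (4 * q)) * (∫ x in (0:ℝ)..(4 * q), I x) = I (2 * q) / 2
  rw [← h3, h4]
  field_simp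
  ring

theorem psi_succ (b c : ℝ) (m : ℕ) (t : ℝ) : psi (m + 1) 0 b c t =
    (∫ x in (0:ℝ)..t, psi m 0 b c x) - (1 / (4 * (b + c))) *
      ∫ x in (0:ℝ)..(4 * (b + c)), ∫ u in (0:ℝ)..x, psi m 0 b c u := by
  simp only [psi, zero_add]

theorem psi_good (b c : ℝ) (hq : 0 < b + c) (m : ℕ) : Good (b + c) m (psi m 0 b c) := by
  induction m with
  | zero =>
    refine ⟨psiZero_int b c, psiZero_anti b c hq, fun t => ?_⟩
    have := psiZero_odd b c hq t
    simpa [psi] using this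
  | succ m ih =>
    obtain ⟨hC, hsh⟩ := anti_const (b + c) hq m _ ih
    have hf : ∀ t, psi (m + 1) 0 b c t = (∫ x in (0:ℝ)..t, psi m 0 b c x)
        - (∫ u in (0:ℝ)..(2 * (b + c)), psi m 0 b c u) / 2 := by
      intro t; rw [psi_succ, hC]
    obtain ⟨hi, ha, hs⟩ := ih
    have hneg : ∀ t, (∫ x in (0:ℝ)..(-t), psi m 0 b c x)
        = (-1) ^ m * ∫ x in (0:ℝ)..t, psi m 0 b c x := by
      intro t
      have := intervalIntegral.integral_comp_neg (a := 0) (b := t) (psi m 0 b c)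
      simp only [hs, neg_zero, intervalIntegral.integral_const_mul] at this
      rw [intervalIntegral.integral_symm, ← this]
      ring
    refine ⟨?_, ?_, ?_⟩
    · intro x y
      have : psi (m + 1) 0 b c = fun t => (∫ x in (0:ℝ)..t, psi m 0 b c x)
        - (∫ u in (0:ℝ)..(2 * (b + c)), psi m 0 b c u) / 2 := funext hf
      rw [this]
      exact ((intervalIntegral.continuous_primitive hi 0).sub continuous_const).intervalIntegrable _ _
    · intro t
      rw [hf, hf, hsh]; ring
    · intro t
      rw [hf, hf, hneg]
      have h2 : (-1 : ℝ) ^ (m + 1 + 1) = (-1) ^ m := by ring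
      rw [h2]
      rcases Nat.even_or_odd m with he | ho
      · rw [he.neg_one_pow]; ring
      · rw [ho.neg_one_pow]
        have h3 := hneg (2 * (b + c))
        have h4 := hsh (-(2 * (b + c)))
        rw [ho.neg_one_pow] at h3
        simp at h4
        linarith

theorem psi_cont (b c : ℝ) (hq : 0 < b + c) (m : ℕ) : Continuous (psi (m + 1) 0 b c) := by
  have : psi (m + 1) 0 b c = fun t => (∫ x in (0:ℝ)..t, psi m 0 b c x) - (1 / (4 * (b + c))) *
      ∫ x in (0:ℝ)..(4 * (b + c)), ∫ u in (0:ℝ)..x, psi m 0 b c u := funext (psi_succ b c m)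
  rw [this]
  exact (intervalIntegral.continuous_primitive (psi_good b c hq m).1 0).sub continuous_const

theorem psi_deriv (b c : ℝ) (hq : 0 < b + c) (m : ℕ) (t : ℝ) :
    HasDerivAt (psi (m + 2) 0 b c) (psi (m + 1) 0 b c t) t := by
  have : psi (m + 2) 0 b c = fun t => (∫ x in (0:ℝ)..t, psi (m + 1) 0 b c x) - (1 / (4 * (b + c))) *
      ∫ x in (0:ℝ)..(4 * (b + c)), ∫ u in (0:ℝ)..x, psi (m + 1) 0 b c u := funext (psi_succ b c (m + 1))
  rw [this]
  have hc := psi_cont b c hq m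
  exact (intervalIntegral.integral_hasDerivAt_right (hc.intervalIntegrable _ _)
      (hc.stronglyMeasurableAtFilter _ _) hc.continuousAt).sub_const _

theorem psi_diff (b c : ℝ) (hq : 0 < b + c) (m : ℕ) (x y : ℝ) :
    psi (m + 1) 0 b c y = psi (m + 1) 0 b c x + ∫ u in x..y, psi m 0 b c u := by
  rw [psi_succ, psi_succ]
  have hi := (psi_good b c hq m).1
  have := intervalIntegral.integral_add_adjacent_intervals (hi 0 x) (hi x y)
  linarith

theorem psi_even_zero (b c : ℝ) (hq : 0 < b + c) (m : ℕ) (hm : Even m) : psi m 0 b c 0 = 0 := by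
  have := (psi_good b c hq m).2.2 0
  rw [hm.add_one.neg_one_pow] at this
  simp at this
  linarith

theorem psi_odd_q (b c : ℝ) (hq : 0 < b + c) (m : ℕ) (hm : Odd m) : psi m 0 b c (b + c) = 0 := by
  have h1 := (psi_good b c hq m).2.2 (b + c)
  have h2 := (psi_good b c hq m).2.1 (-(b + c))
  rw [hm.add_one.neg_one_pow] at h1
  rw [show -(b + c) + 2 * (b + c) = b + c by ring] at h2
  linarith

theorem psi_one (b c : ℝ) (hb : 0 < b) (hc : 0 ≤ c) (t : ℝ) (h0 : 0 ≤ t) (h1 : t ≤ b + c) :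
    psi 1 0 b c t = - max (b - t) 0 := by
  have hq : 0 < b + c := by linarith
  have hv : ∀ x, 0 < x → x ≤ b + c → psi 0 0 b c x = if x ≤ b then 1 else 0 := by
    intro x hx hx2
    have := psiZero_formula b c hq 0 x hx.le (by linarith)
    simp only [Int.cast_zero, mul_zero, zero_add] at this
    simp only [psi]
    rw [this, if_pos (by linarith)]
    simp only [psiHalf, psiBase, zero_add]
    rw [if_pos hx2, if_neg (by linarith)]
  have hd := psi_diff b c hq 0
  have hq0 : psi 1 0 b c (b + c) = 0 := psi_odd_q b c hq 1 odd_one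
  have hflat : ∀ t, b ≤ t → t ≤ b + c → psi 1 0 b c t = 0 := by
    intro t ht ht2
    have h3 := hd t (b + c)
    have h4 : ∫ u in t..(b + c), psi 0 0 b c u = ∫ u in t..(b + c), (0:ℝ) := by
      refine intervalIntegral.integral_congr_ae (Filter.Eventually.of_forall ?_)
      intro x hx
      rw [Set.uIoc_of_le ht2] at hx
      rw [hv x (by linarith [hx.1]) hx.2, if_neg (by linarith [hx.1])]
    rw [h4, zero_add, hq0] at h3
    simp at h3
    exact h3.symm
  rcases le_total b t with h | h
  · rw [max_eq_right (by linarith), hflat t h h1, neg_zero]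
  · rw [max_eq_left (by linarith)]
    have h3 := hd t b
    have h4 : ∫ u in t..b, psi 0 0 b c u = ∫ u in t..b, (1:ℝ) := by
      refine intervalIntegral.integral_congr_ae (Filter.Eventually.of_forall ?_)
      intro x hx
      rw [Set.uIoc_of_le h] at hx
      rw [hv x (by linarith [hx.1]) (by linarith [hx.2]), if_pos hx.2]
    rw [h4, zero_add, hflat b le_rfl (by linarith)] at h3
    simp at h3
    linarith

theorem psi_PW (b c : ℝ) (hb : 0 < b) (hc : 0 ≤ c) (i : ℕ) : ∃ e : ℝ, (e = 1 ∨ e = -1) ∧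
    ∀ t, 0 ≤ t → t ≤ b + c → psi (i + 2) 0 b c t =
      e * (if Even i then PW b i c (b + c - t) else PW b i c t) := by
  have hq : 0 < b + c := by linarith
  induction i with
  | zero =>
    refine ⟨-1, Or.inr rfl, fun t h0 h1 => ?_⟩
    simp only [Even.zero, if_true, PW]
    have hz := psi_even_zero b c hq 2 even_two
    have key : ∀ s, 0 ≤ s → s ≤ b + c → psi 2 0 b c s = psi 2 0 b c 0 + ∫ u in (0:ℝ)..s, - max (b - u) 0 := by
      intro s hs hs2
      rw [psi_diff b c hq 1 0 s]
      congr 1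
      apply intervalIntegral.integral_congr
      intro u hu
      rw [Set.uIcc_of_le hs] at hu
      exact psi_one b c hb hc u hu.1 (by linarith [hu.2])
    have hsmall : ∀ s, 0 ≤ s → s ≤ b → ∫ u in (0:ℝ)..s, - max (b - u) 0 = -(b ^ 2 / 2 - (b - s) ^ 2 / 2) := by
      intro s hs hs2
      have : ∫ u in (0:ℝ)..s, - max (b - u) 0 = ∫ u in (0:ℝ)..s, (u - b) := by
        apply intervalIntegral.integral_congr
        intro u hu
        rw [Set.uIcc_of_le hs] at hu
        simp only
        rw [max_eq_left (by linarith [hu.2])]; ring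
      rw [this, intervalIntegral.integral_sub (by simp) (by simp)]
      simp
      ring
    rw [zero_add, key t h0 h1, hz]
    rcases le_total t b with h | h
    · rw [max_eq_left (by linarith), hsmall t h0 h]; ring
    · rw [max_eq_right (by linarith)]
      have hcont : Continuous fun u : ℝ => - max (b - u) 0 := by fun_prop
      rw [← intervalIntegral.integral_add_adjacent_intervals (b := b) (hcont.intervalIntegrable _ _)
        (hcont.intervalIntegrable _ _), hsmall b hb.le le_rfl]
      have : ∫ u in b..t, - max (b - u) 0 = ∫ u in b..t, (0:ℝ) := by
        apply intervalIntegral.integral_congr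
        intro u hu
        rw [Set.uIcc_of_le h] at hu
        simp only
        rw [max_eq_right (by linarith [hu.1])]; ring
      rw [this]; simp
  | succ i ih =>
    obtain ⟨e, he, hf⟩ := ih
    rcases Nat.even_or_odd i with hi | hi
    · have hn : ¬ Even (i + 1) := by simpa using hi.add_one
      simp only [hi, if_true] at hf
      refine ⟨-e, by rcases he with rfl | rfl <;> simp, fun t h0 h1 => ?_⟩
      simp only [hn, if_false]
      have h3 := psi_diff b c hq (i + 2) t (b + c)
      rw [psi_odd_q b c hq (i + 2 + 1) (by
        have : Even (i + 2) := hi.add even_two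
        exact this.add_one)] at h3
      have h4 : ∫ u in t..(b + c), psi (i + 2) 0 b c u = e * PW b (i + 1) c t := by
        have : ∫ u in t..(b + c), psi (i + 2) 0 b c u = ∫ u in t..(b + c), e * PW b i c (b + c - u) := by
          apply intervalIntegral.integral_congr
          intro u hu
          rw [Set.uIcc_of_le h1] at hu
          exact hf u (by linarith [hu.1]) hu.2
        rw [this, intervalIntegral.integral_const_mul, intervalIntegral.integral_comp_sub_left]
        simp [PW]
      rw [h4] at h3
      rw [show i + 1 + 2 = i + 2 + 1 by ring]
      linarith
    · have hn : Even (i + 1) := hi.add_one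
      simp only [Nat.not_even_iff_odd.2 hi, if_false] at hf
      refine ⟨e, he, fun t h0 h1 => ?_⟩
      simp only [hn, if_true]
      have h3 := psi_diff b c hq (i + 2) 0 t
      rw [psi_even_zero b c hq (i + 2 + 1) (by
        have : Odd (i + 2) := hi.add_even even_two
        exact this.add_one), zero_add] at h3
      rw [show i + 1 + 2 = i + 2 + 1 by ring, h3]
      have : ∫ u in (0:ℝ)..t, psi (i + 2) 0 b c u = ∫ u in (0:ℝ)..t, e * PW b i c u := by
        apply intervalIntegral.integral_congr
        intro u hu
        rw [Set.uIcc_of_le h0] at hu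
        exact hf u hu.1 (by linarith [hu.2])
      rw [this, intervalIntegral.integral_const_mul]
      simp [PW]

theorem PW_le_zero (b : ℝ) (hb : 0 < b) (i : ℕ) (c y : ℝ) (hc : 0 ≤ c) (hy : 0 ≤ y)
    (hyb : y ≤ b + c) : PW b i c y ≤ PW b i c 0 := by
  cases i with
  | zero =>
    simp only [PW]
    rw [max_eq_right (show (0:ℝ) - c ≤ 0 by linarith)]
    have : 0 ≤ max (y - c) 0 ^ 2 := by positivity
    linarith
  | succ i =>
    rcases hy.lt_or_eq with h | h
    · exact (PW_strict b hb i c y hc h hyb).le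
    · rw [← h]

theorem psi_abs_le (b c : ℝ) (hb : 0 < b) (hc : 0 ≤ c) (i : ℕ) (t : ℝ) :
    |psi (i + 2) 0 b c t| ≤ PW b i c 0 := by
  have hq : 0 < b + c := by linarith
  obtain ⟨e, he, hf⟩ := psi_PW b c hb hc i
  obtain ⟨-, ha, hs⟩ := psi_good b c hq (i + 2)
  have h1 : ∀ t, 0 ≤ t → t ≤ b + c → |psi (i + 2) 0 b c t| ≤ PW b i c 0 := by
    intro t h0 h1
    have h2 : ∀ y, 0 ≤ y → y ≤ b + c → |e * PW b i c y| ≤ PW b i c 0 := by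
      intro y hy hy2
      rw [abs_mul, abs_of_nonneg (PW_nonneg b hb i c y hc hy hy2)]
      have : |e| = 1 := by rcases he with rfl | rfl <;> simp
      rw [this, one_mul]; exact PW_le_zero b hb i c y hc hy hy2
    rw [hf t h0 h1]
    split_ifs
    · exact h2 _ (by linarith) (by linarith)
    · exact h2 _ h0 h1
  have hper : Function.Periodic (fun t => |psi (i + 2) 0 b c t|) (2 * (b + c)) := by
    intro t; simp only [ha, abs_neg]
  have hev : ∀ t, |psi (i + 2) 0 b c (-t)| = |psi (i + 2) 0 b c t| := by
    intro t; rw [hs, abs_mul]; simp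
  obtain ⟨n, ρ, h0, h2, rfl⟩ := exists_rep (2 * (b + c)) (by linarith) t
  have h3 : |psi (i + 2) 0 b c (2 * (b + c) * n + ρ)| = |psi (i + 2) 0 b c ρ| := by
    have := hper.int_mul n ρ
    rw [show 2 * (b + c) * n + ρ = ρ + n * (2 * (b + c)) by ring]
    exact this
  rw [h3]
  rcases le_total ρ (b + c) with h | h
  · exact h1 ρ h0 h
  · have h4 := hper (-ρ)
    simp only at h4
    rw [← hev ρ, ← h4]
    exact h1 _ (by linarith) (by linarith)

theorem psi_attain (b c : ℝ) (hb : 0 < b) (hc : 0 ≤ c) (i : ℕ) :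
    ∃ t, psi (i + 2) 0 b c t = PW b i c 0 := by
  have hq : 0 < b + c := by linarith
  obtain ⟨e, he, hf⟩ := psi_PW b c hb hc i
  obtain ⟨-, ha, -⟩ := psi_good b c hq (i + 2)
  obtain ⟨t, ht⟩ : ∃ t, psi (i + 2) 0 b c t = e * PW b i c 0 := by
    rcases Nat.even_or_odd i with hi | hi
    · refine ⟨b + c, ?_⟩
      rw [hf _ hq.le le_rfl, if_pos hi, sub_self]
    · refine ⟨0, ?_⟩
      rw [hf _ le_rfl hq.le, if_neg (Nat.not_even_iff_odd.2 hi)]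
  rcases he with rfl | rfl
  · exact ⟨t, by rw [ht]; ring⟩
  · exact ⟨t + 2 * (b + c), by rw [ha, ht]; ring⟩

theorem unif_eq (g : ℝ → ℝ) (A : ℝ) (h : ∀ t, |g t| ≤ A) (h2 : ∃ t, |g t| = A) : unif g = A := by
  apply le_antisymm
  · exact ciSup_le h
  · obtain ⟨t, rfl⟩ := h2
    exact le_ciSup (f := fun t => |g t|) ⟨_, by rintro _ ⟨t, rfl⟩; exact h t⟩ t

theorem iter_psi (b c α d : ℝ) (hq : 0 < b + c) (r : ℕ) (j : ℕ) (hj : 1 ≤ j) (hjr : j + 1 ≤ r) :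
    iteratedDeriv j (fun t => α * psi r 0 b c t + d) = fun t => α * psi (r - j) 0 b c t := by
  induction j with
  | zero => omega
  | succ j ih =>
    obtain ⟨m, rfl⟩ : ∃ m, r = m + j + 2 := ⟨r - j - 2, by omega⟩
    have e : m + j + 2 - (j + 1) = m + 1 := by omega
    rw [iteratedDeriv_succ, e]
    rcases Nat.eq_zero_or_pos j with h | h
    · subst h
      ext t
      rw [iteratedDeriv_zero]
      exact (((psi_deriv b c hq m t).const_mul α).add_const d).deriv
    · rw [ih h (by omega), show m + j + 2 - j = m + 2 by omega]
      ext t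
      exact ((psi_deriv b c hq m t).const_mul α).deriv

theorem M_psi (b c α d : ℝ) (hα : 0 < α) (hb : 0 < b) (hc : 0 ≤ c) (r j : ℕ) (hj : 1 ≤ j)
    (hjr : j + 2 ≤ r) : M j (fun t => α * psi r 0 b c t + d) = α * PW b (r - 2 - j) c 0 := by
  unfold M
  rw [iter_psi b c α d (by linarith) r j hj (by omega)]
  obtain ⟨i, rfl⟩ : ∃ i, r = i + 2 + j := ⟨r - 2 - j, by omega⟩
  rw [show i + 2 + j - j = i + 2 by omega, show i + 2 + j - 2 - j = i by omega]
  apply unif_eq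
  · intro t
    rw [abs_mul, abs_of_pos hα]
    exact mul_le_mul_of_nonneg_left (psi_abs_le b c hb hc i t) hα.le
  · obtain ⟨t, ht⟩ := psi_attain b c hb hc i
    refine ⟨t, ?_⟩
    rw [ht, abs_of_nonneg]
    exact mul_nonneg hα.le (PW_nonneg b hb i c 0 hc le_rfl (by linarith))

theorem M_psi_zero (b c α d : ℝ) (hα : 0 < α) (hb : 0 < b) (hc : 0 ≤ c) (hd : 0 ≤ d) (i : ℕ) :
    M 0 (fun t => α * psi (i + 2) 0 b c t + d) = α * PW b i c 0 + d := by
  unfold M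
  rw [iteratedDeriv_zero]
  apply unif_eq
  · intro t
    have := mul_le_mul_of_nonneg_left (psi_abs_le b c hb hc i t) hα.le
    calc _ ≤ |α * psi (i + 2) 0 b c t| + |d| := abs_add_le _ _
      _ ≤ _ := by rw [abs_mul, abs_of_pos hα, abs_of_nonneg hd]; linarith
  · obtain ⟨t, ht⟩ := psi_attain b c hb hc i
    refine ⟨t, ?_⟩
    rw [ht, abs_of_nonneg]
    have := mul_nonneg hα.le (PW_nonneg b hb i c 0 hc le_rfl (by linarith))
    linarith

theorem M_psi_top (b c α d : ℝ) (hα : 0 < α) (hb : 0 < b) (hc : 0 ≤ c) (r : ℕ) (hr : 2 ≤ r) :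
    M r (fun t => α * psi r 0 b c t + d) = α := by
  have hq : 0 < b + c := by linarith
  obtain ⟨m, rfl⟩ : ∃ m, r = m + 1 := ⟨r - 1, by omega⟩
  unfold M
  rw [iteratedDeriv_succ, iter_psi b c α d hq (m + 1) m (by omega) le_rfl,
    show m + 1 - m = 1 by omega]
  have hL : LipschitzWith (Real.toNNReal α) (fun t => α * psi 1 0 b c t) := by
    apply LipschitzWith.of_dist_le_mul
    intro x y
    rw [Real.dist_eq, Real.dist_eq, Real.coe_toNNReal _ hα.le, ← mul_sub, abs_mul, abs_of_pos hα]
    apply mul_le_mul_of_nonneg_left _ hα.le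
    have h := psi_diff b c hq 0 y x
    rw [zero_add] at h
    rw [h, add_sub_cancel_left]
    have := intervalIntegral.norm_integral_le_of_norm_le_const (a := y) (b := x) (f := psi 0 0 b c)
      (C := 1) (fun t _ => psiZero_bd b c t)
    simpa using this
  apply unif_eq
  · intro t
    have := norm_deriv_le_of_lipschitz (x₀ := t) hL
    rwa [Real.coe_toNNReal _ hα.le] at this
  · refine ⟨b / 2, ?_⟩
    have h1 : HasDerivAt (fun t : ℝ => α * (t - b)) (α * 1) (b / 2) :=
      ((hasDerivAt_id (b / 2)).sub_const b).const_mul α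
    have h2 : (fun t => α * psi 1 0 b c t) =ᶠ[nhds (b / 2)] fun t : ℝ => α * (t - b) := by
      filter_upwards [Ioo_mem_nhds (show 0 < b / 2 by linarith) (show b / 2 < b by linarith)] with t ht
      rw [psi_one b c hb hc t ht.1.le (by linarith [ht.2]), max_eq_left (by linarith [ht.2])]
      ring
    rw [h2.deriv_eq, h1.deriv, mul_one, abs_of_pos hα]

end

/-- **Solution of the Kolmogorov problem for orders `(0,k,r-2,r)`.** For every
non-constant `f ∈ L^r_{∞,∞}` there are `α, b > 0` and `c, d ≥ 0` such that
`g = α ψ_r(0,b,c) + d` has the same norms `M_0`, `M_k`, `M_{r-2}`, `M_r` as `f`. -/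
theorem stmt18 (r k : ℕ) (hr : 4 ≤ r) (hk : 0 < k) (hkr : k < r - 2)
    (f : ℝ → ℝ) (hf : MemL r f) (hnc : ∃ x y : ℝ, f x ≠ f y) :
    ∃ α b c d : ℝ, 0 < α ∧ 0 < b ∧ 0 ≤ c ∧ 0 ≤ d ∧
      M 0 (fun t => α * psi r 0 b c t + d) = M 0 f ∧
      M k (fun t => α * psi r 0 b c t + d) = M k f ∧
      M (r - 2) (fun t => α * psi r 0 b c t + d) = M (r - 2) f ∧
      M r (fun t => α * psi r 0 b c t + d) = M r f := by
  obtain ⟨-, hbd, hcd, K, hK⟩ := hf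
  have hG : ∀ j, j < r - 1 → ∀ x, HasDerivAt (iteratedDeriv j f) (iteratedDeriv (j + 1) f x) x := by
    intro j hj x
    rw [iteratedDeriv_succ]
    exact (hcd.differentiable_iteratedDeriv j (by exact_mod_cast hj) x).hasDerivAt
  have hLip : ∀ x y, |iteratedDeriv (r - 1) f x - iteratedDeriv (r - 1) f y| ≤ K * |x - y| := by
    intro x y
    have := hK.dist_le_mul x y
    simpa [Real.dist_eq] using this
  have hB := all_bd (r - 1) (fun j => iteratedDeriv j f) K hG (by simpa [Bd] using hbd) hLip
  have hnz : ¬ ∀ x, iteratedDeriv (r - 1) f x = 0 := by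
    intro h
    obtain ⟨x, y, hxy⟩ := hnc
    have := const_of_zero (r - 1) (fun j => iteratedDeriv j f) hG hB h x y
    simp at this
    exact hxy this
  obtain ⟨hBr, hLr⟩ := lip_unif _ K hK
  have hMr : M r f = unif (deriv (iteratedDeriv (r - 1) f)) := by
    unfold M
    rw [← iteratedDeriv_succ, show r - 1 + 1 = r by omega]
  rw [← hMr] at hLr
  have e2 : r - 2 + 1 = r - 1 := by omega
  have hα : 0 < M r f := by
    by_contra hcon
    have hc0 : ∀ x, iteratedDeriv (r - 1) f x = iteratedDeriv (r - 1) f 0 := by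
      intro x
      have h1 := hLr x 0
      have h2 : M r f * |x - 0| ≤ 0 := mul_nonpos_of_nonpos_of_nonneg (not_lt.1 hcon) (abs_nonneg _)
      have h3 := abs_nonpos_iff.1 (h1.trans h2)
      linarith
    have h0 : iteratedDeriv (r - 1) f 0 = 0 := const_zero (iteratedDeriv (r - 2) f) _ (fun x => by
      have := hG (r - 2) (by omega) x
      rwa [e2, hc0 x] at this) (hB (r - 2) (by omega))
    exact hnz fun x => by rw [hc0 x, h0]
  have hm : 0 < M (r - 2) f := by
    by_contra hcon
    have h0 : ∀ x, iteratedDeriv (r - 2) f x = 0 := fun x =>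
      abs_nonpos_iff.1 ((le_unif (hB (r - 2) (by omega)) x).trans (not_lt.1 hcon))
    apply hnz
    intro x
    rw [← e2, ← (hG (r - 2) (by omega) x).deriv]
    have : iteratedDeriv (r - 2) f = fun _ => 0 := funext h0
    rw [this]; simp
  set α := M r f with hαdef
  set b := Real.sqrt (2 * M (r - 2) f / α) with hbdef
  have hb : 0 < b := Real.sqrt_pos.2 (by positivity)
  have hb2 : α * (b ^ 2 / 2) = M (r - 2) f := by
    rw [hbdef, Real.sq_sqrt (by positivity)]
    field_simp
  set F : ℕ → ℝ → ℝ := fun i => iteratedDeriv (r - 2 - i) f with hFdef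
  have hFd : ∀ j, j < r - 2 → ∀ x, HasDerivAt (F (j + 1)) (F j x) x := by
    intro j hj x
    have := hG (r - 2 - (j + 1)) (by omega) x
    rwa [show r - 2 - (j + 1) + 1 = r - 2 - j by omega] at this
  have hFB : ∀ j, j ≤ r - 2 → Bd (F j) := fun j hj => hB (r - 2 - j) (by omega)
  have hS0 : St α b F 0 0 := by
    refine St_zero α b F (iteratedDeriv (r - 1) f) ?_ (hFB 0 (by omega)) hLr hb2.symm
    intro x
    have := hG (r - 2) (by omega) x
    rwa [e2] at this
  obtain ⟨c, hc, hS1⟩ := St_chain α b hα hb F (r - 2) 0 (r - 2 - k) 0 hFd hFB (by omega) hS0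
  obtain ⟨c', hcc', hS2⟩ := St_chain α b hα hb F (r - 2) (0 + (r - 2 - k)) k c hFd hFB (by omega) hS1
  rw [show 0 + (r - 2 - k) + k = r - 2 by omega] at hS2
  rw [zero_add] at hS1
  have hn1 : M k f = α * PW b (r - 2 - k) c 0 := by
    rw [← hS1.2.1]; simp only [hFdef, M]; rw [show r - 2 - (r - 2 - k) = k by omega]
  have hn2 : M 0 f = α * PW b (r - 2) c' 0 := by
    rw [← hS2.2.1]; simp only [hFdef, M]; rw [show r - 2 - (r - 2) = 0 by omega]
  have hd : 0 ≤ M 0 f - α * PW b (r - 2) c 0 := by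
    rw [hn2]
    have := mul_le_mul_of_nonneg_left
      (PW_mono b hb (r - 2) c c' 0 hc hcc' le_rfl (by linarith)) hα.le
    linarith
  refine ⟨α, b, c, M 0 f - α * PW b (r - 2) c 0, hα, hb, hc, hd, ?_, ?_, ?_, ?_⟩
  · have := M_psi_zero b c α _ hα hb hc hd (r - 2)
    rw [show r - 2 + 2 = r by omega] at this
    rw [this]; ring
  · rw [M_psi b c α _ hα hb hc r k (by omega) (by omega), hn1]
  · rw [M_psi b c α _ hα hb hc r (r - 2) (by omega) (by omega), ← hb2, Nat.sub_self]
    simp only [PW]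
    rw [max_eq_right (by linarith)]; ring
  · exact M_psi_top b c α _ hα hb hc r (by omega)
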